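/- Let n ≥ 4 be an integer. Then the unique-Ramsey number of Hamilton paths satisfies r_u(n, P_n) > n/4. Equivalently, for every positive integer r with r ≤ n/4 and every edge-coloring of the complete graph K_n with r colors, there exists a Hamilton path of K_n in which no color occurs exactly once. -/

import Mathlib

namespace UR

open Finset

section lists
variable {V : Type*}

/-- consecutive pairs of a list, as unordered pairs -/
def edg : List V → List (Sym2 V)
  | [] => []
  | [_] => []
  | a :: b :: l => s(a, b) :: edg (b :: l)

theorem mem_of_mem_edg {e : Sym2 V} {w : V} : ∀ {l : List V}, e ∈ edg l → w ∈ e → w ∈ l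
  | [], h, _ => by simp [edg] at h
  | [_], h, _ => by simp [edg] at h
  | a :: b :: l, h, hw => by
    simp only [edg, List.mem_cons] at h
    rcases h with rfl | h
    · rcases Sym2.mem_iff.1 hw with rfl | rfl <;> simp
    · exact List.mem_cons_of_mem _ (mem_of_mem_edg h hw)

theorem edg_append (p : List V) (a b : V) (q : List V) :
    edg (p ++ a :: b :: q) = edg (p ++ [a]) ++ s(a, b) :: edg (b :: q) := by
  induction p with
  | nil => simp [edg]
  | cons x p ih =>
    cases p with
    | nil => simp [edg]
    | cons y p => simpa [edg] using ih

theorem mem_edg_append {e : Sym2 V} {m1 m2 : List V} : e ∈ edg (m1 ++ m2) ↔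
    e ∈ edg m1 ∨ e ∈ edg m2 ∨ ∃ p a b q, m1 = p ++ [a] ∧ m2 = b :: q ∧ e = s(a, b) := by
  rcases List.eq_nil_or_concat m1 with rfl | ⟨p, a, rfl⟩
  · simp [edg]
  · cases m2 with
    | nil => simp [edg]
    | cons b q =>
      have := edg_append p a b q
      simp only [List.concat_eq_append, List.append_assoc, List.cons_append, List.nil_append, this,
        List.mem_append, List.mem_cons]
      constructor
      · rintro (h | h | h)
        · exact Or.inl h
        · exact Or.inr (Or.inr ⟨p, a, b, q, rfl, rfl, h⟩)
        · exact Or.inr (Or.inl h)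
      · rintro (h | h | ⟨p', a', b', q', h1, h2, h3⟩)
        · exact Or.inl h
        · exact Or.inr (Or.inr h)
        · have := List.append_inj' h1 rfl
          simp at this h2
          obtain ⟨rfl, rfl⟩ := this
          obtain ⟨rfl, rfl⟩ := h2
          exact Or.inr (Or.inl h3)

theorem mem_edg_cons {e : Sym2 V} {y : V} {m : List V} : e ∈ edg (y :: m) ↔
    e ∈ edg m ∨ ∃ b q, m = b :: q ∧ e = s(y, b) := by
  cases m with
  | nil => simp [edg]
  | cons b q =>
    simp only [edg, List.mem_cons, List.cons.injEq]
    constructor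
    · rintro (h | h)
      · exact Or.inr ⟨b, q, ⟨rfl, rfl⟩, h⟩
      · exact Or.inl h
    · rintro (h | ⟨_, _, ⟨rfl, rfl⟩, h⟩)
      · exact Or.inr h
      · exact Or.inl h

/-- deleting a vertex keeps the edges avoiding it -/
theorem edg_delete {e : Sym2 V} {z : V} {l1 l2 : List V} (h : e ∈ edg (l1 ++ z :: l2))
    (hz : z ∉ e) : e ∈ edg (l1 ++ l2) := by
  rw [mem_edg_append] at h ⊢
  rcases h with h | h | ⟨p, a, b, q, h1, h2, h3⟩
  · exact Or.inl h
  · rcases mem_edg_cons.1 h with h | ⟨b, q, _, rfl⟩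
    · exact Or.inr (Or.inl h)
    · simp at hz
  · simp at h2
    obtain ⟨rfl, rfl⟩ := h2
    subst h3
    simp at hz

/-- inserting a vertex keeps edges other than the junction -/
theorem edg_insert {e : Sym2 V} (z : V) {m1 m2 : List V} (h : e ∈ edg (m1 ++ m2))
    (hj : ∀ p a b q, m1 = p ++ [a] → m2 = b :: q → e ≠ s(a, b)) :
    e ∈ edg (m1 ++ z :: m2) := by
  rw [mem_edg_append] at h ⊢
  rcases h with h | h | ⟨p, a, b, q, h1, h2, h3⟩
  · exact Or.inl h
  · exact Or.inr (Or.inl (mem_edg_cons.2 (Or.inl h)))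
  · exact absurd h3 (hj p a b q h1 h2)

theorem edg_at {e : Sym2 V} {y : V} {m1 m2 : List V} (hn : (m1 ++ y :: m2).Nodup)
    (h : e ∈ edg (m1 ++ y :: m2)) (hy : y ∈ e) :
    (∃ p a, m1 = p ++ [a] ∧ e = s(a, y)) ∨ (∃ b q, m2 = b :: q ∧ e = s(y, b)) := by
  have h1 : y ∉ m1 := by
    intro h'
    have := (List.nodup_append.1 hn).2.2
    exact this _ h' y (by simp) rfl
  have h2 : y ∉ m2 := by
    have := (List.nodup_append.1 hn).2.1
    exact (List.nodup_cons.1 this).1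
  rcases mem_edg_append.1 h with h | h | ⟨p, a, b, q, e1, e2, e3⟩
  · exact absurd (mem_of_mem_edg h hy) h1
  · rcases mem_edg_cons.1 h with h | h
    · exact absurd (mem_of_mem_edg h hy) h2
    · exact Or.inr h
  · simp at e2
    obtain ⟨rfl, rfl⟩ := e2
    exact Or.inl ⟨p, a, e1, e3⟩

theorem edg_nodup : ∀ {l : List V}, l.Nodup → (edg l).Nodup
  | [], _ => by simp [edg]
  | [_], _ => by simp [edg]
  | a :: b :: l, h => by
    simp only [edg, List.nodup_cons]
    rw [List.nodup_cons] at h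
    exact ⟨fun h' => h.1 (mem_of_mem_edg h' (by simp)), edg_nodup h.2⟩

theorem edg_not_diag {g h : V} : ∀ {l : List V}, l.Nodup → s(g, h) ∈ edg l → g ≠ h
  | [], _, h => by simp [edg] at h
  | [_], _, h => by simp [edg] at h
  | a :: b :: l, hn, h' => by
    simp only [edg, List.mem_cons] at h'
    rw [List.nodup_cons] at hn
    rcases h' with h' | h'
    · rintro rfl
      rw [Sym2.eq_iff] at h'
      have : a ≠ b := by rintro rfl; simp at hn
      grind
    · exact edg_not_diag hn.2 h'

theorem exists_walk : ∀ (l : List V) (u : V), (u :: l).Nodup →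
    ∃ (v : V) (w : (⊤ : SimpleGraph V).Walk u v), w.support = u :: l ∧ w.edges = edg (u :: l)
  | [], u, _ => ⟨u, .nil, by simp [edg]⟩
  | b :: l, u, h => by
    rw [List.nodup_cons] at h
    obtain ⟨v, w, h1, h2⟩ := exists_walk l b h.2
    have hub : (⊤ : SimpleGraph V).Adj u b := by
      simp only [SimpleGraph.top_adj]
      rintro rfl
      simp at h
    exact ⟨v, .cons hub w, by simp [h1], by simp [h2, edg]⟩

/-- linear forest -/
def LF (F : Finset (Sym2 V)) : Prop := ∃ l : List V, l.Nodup ∧ (∀ v, v ∈ l) ∧ ∀ e ∈ F, e ∈ edg l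

def D1 (F : Finset (Sym2 V)) (y : V) : Prop := ∀ e ∈ F, ∀ f ∈ F, y ∈ e → y ∈ f → e = f

def Iso (F : Finset (Sym2 V)) (z : V) : Prop := ∀ e ∈ F, z ∉ e

theorem Iso.d1 {F : Finset (Sym2 V)} {z : V} (h : Iso F z) : D1 F z :=
  fun e he _ _ hz _ => absurd hz (h e he)

variable [DecidableEq V]

theorem Iso.insert {F : Finset (Sym2 V)} {z : V} {e : Sym2 V} (h : Iso F z) (he : z ∉ e) :
    Iso (Insert.insert e F) z := by
  intro f hf
  rcases Finset.mem_insert.1 hf with rfl | hf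
  · exact he
  · exact h f hf

theorem D1.insert {F : Finset (Sym2 V)} {z : V} {e : Sym2 V} (h : D1 F z) (he : z ∉ e) :
    D1 (Insert.insert e F) z := by
  intro f hf g hg h1 h2
  rw [Finset.mem_insert] at hf hg
  rcases hf with rfl | hf
  · exact absurd h1 he
  rcases hg with rfl | hg
  · exact absurd h2 he
  exact h f hf g hg h1 h2

theorem Iso.d1_insert {F : Finset (Sym2 V)} {z : V} (e : Sym2 V) (h : Iso F z) :
    D1 (Insert.insert e F) z := by
  intro f hf g hg h1 h2
  rw [Finset.mem_insert] at hf hg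
  rcases hf with rfl | hf
  · rcases hg with rfl | hg
    · rfl
    · exact absurd h2 (h _ hg)
  · exact absurd h1 (h _ hf)

theorem LF.mono {F G : Finset (Sym2 V)} (h : LF F) (hG : G ⊆ F) : LF G := by
  obtain ⟨l, h1, h2, h3⟩ := h
  exact ⟨l, h1, h2, fun e he => h3 e (hG he)⟩

theorem LF.add {F : Finset (Sym2 V)} (h : LF F) {z y : V} (hz : Iso F z) (hy : D1 F y)
    (hne : y ≠ z) : LF (insert s(z, y) F) := by
  obtain ⟨l, hn, ha, hF⟩ := h
  obtain ⟨l1, l2, rfl⟩ := List.append_of_mem (ha z)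
  have hF' : ∀ e ∈ F, e ∈ edg (l1 ++ l2) := fun e he => edg_delete (hF e he) (hz e he)
  have hyl : y ∈ l1 ++ l2 := by
    have := ha y
    simp at this ⊢
    tauto
  have hp : (z :: (l1 ++ l2)).Nodup := (List.perm_middle.nodup_iff).1 hn
  have ha' : ∀ v, v ∈ z :: (l1 ++ l2) := fun v => List.perm_middle.mem_iff.1 (ha v)
  generalize l1 ++ l2 = m at *
  obtain ⟨m1, m2, rfl⟩ := List.append_of_mem hyl
  have hnm : (m1 ++ y :: m2).Nodup := (List.nodup_cons.1 hp).2
  by_cases hc : ∃ p a, m1 = p ++ [a] ∧ s(a, y) ∈ F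
  · obtain ⟨p, a, rfl, haF⟩ := hc
    have heq : (p ++ [a]) ++ y :: (z :: m2) = (p ++ [a] ++ [y]) ++ z :: m2 := by simp
    refine ⟨(p ++ [a]) ++ y :: (z :: m2), ?_, ?_, ?_⟩
    · rw [heq, List.perm_middle.nodup_iff]; simpa using hp
    · intro v
      rw [heq, List.perm_middle.mem_iff]; simpa using ha' v
    · intro e he
      rcases Finset.mem_insert.1 he with rfl | he
      · rw [edg_append]; simp [Sym2.eq_swap]
      · rw [heq]
        apply edg_insert
        · simpa using hF' e he
        · rintro p' a' b q h1 rfl rfl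
          have := List.append_inj' h1 rfl
          simp at this
          obtain ⟨_, rfl⟩ := this
          have := hy _ he _ haF (by simp) (by simp)
          have hab : a = b := by
            rw [Sym2.eq_iff] at this
            grind
          subst hab
          simp [List.nodup_append] at hnm
  · refine ⟨m1 ++ z :: y :: m2, ?_, ?_, ?_⟩
    · rw [List.perm_middle.nodup_iff]; exact hp
    · intro v
      rw [List.perm_middle.mem_iff]; exact ha' v
    · intro e he
      rcases Finset.mem_insert.1 he with rfl | he
      · rw [edg_append]; simp
      · apply edg_insert _ (hF' e he)
        rintro p a b q rfl h2 rfl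
        simp at h2
        obtain ⟨rfl, rfl⟩ := h2
        exact hc ⟨p, a, rfl, he⟩

theorem d1_left {F : Finset (Sym2 V)} {m1 m2 : List V} {y y' : V}
    (hn : (m1 ++ y :: y' :: m2).Nodup) (hF : ∀ e ∈ F, e ∈ edg (m1 ++ y :: y' :: m2))
    (h : s(y, y') ∉ F) : D1 F y := by
  intro e he f hf h1 h2
  have key : ∀ e ∈ F, y ∈ e → ∃ p a, m1 = p ++ [a] ∧ e = s(a, y) := by
    intro e he h1
    rcases edg_at hn (hF e he) h1 with h' | ⟨b, q, h', rfl⟩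
    · exact h'
    · simp at h'
      obtain ⟨rfl, rfl⟩ := h'
      exact absurd he h
  obtain ⟨p, a, rfl, rfl⟩ := key e he h1
  obtain ⟨p', a', h', rfl⟩ := key f hf h2
  have := List.append_inj' h' rfl
  simp at this
  rw [this.2]

theorem d1_right {F : Finset (Sym2 V)} {m1 m2 : List V} {y y' : V}
    (hn : (m1 ++ y :: y' :: m2).Nodup) (hF : ∀ e ∈ F, e ∈ edg (m1 ++ y :: y' :: m2))
    (h : s(y, y') ∉ F) : D1 F y' := by
  intro e he f hf h1 h2
  have heq : m1 ++ y :: y' :: m2 = (m1 ++ [y]) ++ y' :: m2 := by simp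
  rw [heq] at hn hF
  have key : ∀ e ∈ F, y' ∈ e → ∃ b q, m2 = b :: q ∧ e = s(y', b) := by
    intro e he h1
    rcases edg_at hn (hF e he) h1 with ⟨p, a, h', rfl⟩ | h'
    · have := List.append_inj' h' rfl
      simp at this
      obtain ⟨_, rfl⟩ := this
      exact absurd he h
    · exact h'
  obtain ⟨b, q, rfl, rfl⟩ := key e he h1
  obtain ⟨b', q', h', rfl⟩ := key f hf h2
  simp at h'
  rw [h'.1]

theorem d1_head {F : Finset (Sym2 V)} {m2 : List V} {y : V}
    (hn : (y :: m2).Nodup) (hF : ∀ e ∈ F, e ∈ edg (y :: m2)) : D1 F y := by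
  intro e he f hf h1 h2
  have key : ∀ e ∈ F, y ∈ e → ∃ b q, m2 = b :: q ∧ e = s(y, b) := by
    intro e he h1
    rcases edg_at (m1 := []) hn (hF e he) h1 with ⟨p, a, h', rfl⟩ | h'
    · simp at h'
    · exact h'
  obtain ⟨b, q, rfl, rfl⟩ := key e he h1
  obtain ⟨b', q', h', rfl⟩ := key f hf h2
  simp only [List.cons.injEq] at h'
  obtain ⟨hbb, _⟩ := h'
  rw [hbb]

/-- delete a set of isolated vertices from a list -/
theorem delete_all {F : Finset (Sym2 V)} (W : Finset V) (hW : ∀ w ∈ W, Iso F w) (l : List V)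
    (hn : l.Nodup) (hF : ∀ e ∈ F, e ∈ edg l) :
    ∃ l' : List V, l'.Nodup ∧ (∀ e ∈ F, e ∈ edg l') ∧ ∀ v, v ∈ l' ↔ v ∈ l ∧ v ∉ W := by
  induction W using Finset.induction_on with
  | empty => exact ⟨l, hn, hF, by simp⟩
  | insert w W hw ih =>
    obtain ⟨l', h1, h2, h3⟩ := ih fun v hv => hW v (Finset.mem_insert_of_mem hv)
    by_cases hwl : w ∈ l'
    · obtain ⟨a, b, rfl⟩ := List.append_of_mem hwl
      rw [List.perm_middle.nodup_iff, List.nodup_cons] at h1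
      refine ⟨a ++ b, h1.2, fun e he => edg_delete (h2 e he) (hW w (by simp) e he), ?_⟩
      intro v
      have h3v := h3 v
      have h1' := h1.1
      rw [List.perm_middle.mem_iff, List.mem_cons] at h3v
      by_cases hvw : v = w
      · subst hvw; simp at h1' ⊢; tauto
      · simp only [hvw, false_or] at h3v
        rw [h3v]; simp [hvw]
    · refine ⟨l', h1, h2, fun v => ?_⟩
      rw [h3 v, Finset.mem_insert]
      constructor
      · rintro ⟨hv, hv'⟩
        refine ⟨hv, ?_⟩
        rintro (rfl | h)
        · exact hwl ((h3 v).2 ⟨hv, hv'⟩)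
        · exact hv' h
      · rintro ⟨hv, hv'⟩
        exact ⟨hv, fun h => hv' (Or.inr h)⟩

/-- fix all bad edges using universal vertices -/
theorem fix_bad {F : Finset (Sym2 V)} (bad : Sym2 V → Bool) (hbF : ∀ e ∈ F, bad e = false)
    (U : Finset V)
    (hgood : ∀ w ∈ U, ∀ y, y ≠ w → D1 F y → bad s(w, y) = false) (l : List V) (hn : l.Nodup)
    (hF : ∀ e ∈ F, e ∈ edg l) (hU : ∀ w ∈ U, w ∉ l) (hc : (edg l).countP bad ≤ U.card) :
    ∃ l' : List V, l'.Nodup ∧ (∀ e ∈ F, e ∈ edg l') ∧ (∀ v, v ∈ l ∨ v ∈ U → v ∈ l') ∧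
      (edg l').countP bad = 0 := by
  induction U using Finset.induction_on generalizing l with
  | empty => exact ⟨l, hn, hF, by simp, by simpa using hc⟩
  | insert w U hw ih =>
    have hwl : w ∉ l := hU w (by simp)
    rw [Finset.card_insert_of_notMem hw] at hc
    suffices h : ∃ l₁ : List V, l₁.Perm (w :: l) ∧ (∀ e ∈ F, e ∈ edg l₁) ∧
        (edg l₁).countP bad ≤ U.card by
      obtain ⟨l₁, hp, h1, h2⟩ := h
      obtain ⟨l', a1, a2, a3, a4⟩ := ih (fun w' hw' => hgood w' (Finset.mem_insert_of_mem hw')) l₁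
        (hp.nodup_iff.2 (List.nodup_cons.2 ⟨hwl, hn⟩)) h1
        (fun w' hw' hwl' => by
          rcases List.mem_cons.1 (hp.mem_iff.1 hwl') with rfl | h
          · exact hw hw'
          · exact hU w' (Finset.mem_insert_of_mem hw') h) h2
      refine ⟨l', a1, a2, fun v hv => a3 v ?_, a4⟩
      rw [hp.mem_iff]
      simp at hv ⊢
      tauto
    by_cases hb : ∃ e ∈ edg l, bad e = true
    · obtain ⟨e, he, hbe⟩ := hb
      have hsplit : ∀ l : List V, e ∈ edg l → ∃ p a b q, l = p ++ a :: b :: q ∧ e = s(a, b) := by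
        intro l
        induction l with
        | nil => simp [edg]
        | cons x l ih =>
          intro h
          rcases mem_edg_cons.1 h with h | ⟨b, q, rfl, rfl⟩
          · obtain ⟨p, a, b, q, rfl, h2⟩ := ih h
            exact ⟨x :: p, a, b, q, rfl, h2⟩
          · exact ⟨[], x, b, q, rfl, rfl⟩
      obtain ⟨p, a, b, q, rfl, rfl⟩ := hsplit l he
      have hab : s(a, b) ∉ F := fun h => by simp [hbF _ h] at hbe
      have ga := hgood w (by simp) a (by rintro rfl; simp at hwl) (d1_left hn hF hab)
      have gb := hgood w (by simp) b (by rintro rfl; simp at hwl) (d1_right hn hF hab)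
      have heq : p ++ a :: w :: b :: q = (p ++ [a]) ++ w :: b :: q := by simp
      refine ⟨p ++ a :: w :: b :: q, ?_, ?_, ?_⟩
      · rw [heq]
        refine List.perm_middle.trans ?_
        simp
      · intro e he
        rw [heq]
        apply edg_insert
        · simpa using hF e he
        · rintro p' a' b' q' h1 h2 rfl
          have := List.append_inj' h1 rfl
          simp at this h2
          obtain ⟨_, rfl⟩ := this
          obtain ⟨rfl, _⟩ := h2
          exact hab he
      · rw [edg_append] at hc ⊢
        have ga' : bad s(a, w) = false := by rw [Sym2.eq_swap]; exact ga
        simp only [edg, List.countP_append, List.countP_cons, hbe, ga', gb] at hc ⊢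
        simp at hc ⊢
        omega
    · have h0 : (edg l).countP bad = 0 := by
        rw [List.countP_eq_zero]
        intro e he hbe
        exact hb ⟨e, he, hbe⟩
      refine ⟨w :: l, List.Perm.refl _, fun e he => mem_edg_cons.2 (Or.inl (hF e he)), ?_⟩
      cases l with
      | nil => simp [edg]
      | cons y m =>
        have g := hgood w (by simp) y (by rintro rfl; simp at hwl) (d1_head hn hF)
        simp only [edg, List.countP_cons, g, h0]
        simp

end lists

section main
variable {V C : Type*} [Fintype V] [DecidableEq V] [Fintype C] [DecidableEq C]

def Valid (χ : Sym2 V → C) (F : Finset (Sym2 V)) : Prop :=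
  LF F ∧ ∀ c ∈ F.image χ, (F.filter (fun e => χ e = c)).card = 2

def Clean (χ : Sym2 V → C) (F : Finset (Sym2 V)) (d : C) : Prop :=
  d ∈ F.image χ ∧ ∀ e ∈ F, χ e = d → ∀ f ∈ F, ∀ w, w ∈ e → w ∈ f → χ f = d

def Special (χ : Sym2 V → C) (F : Finset (Sym2 V)) (c : C) : Prop :=
  c ∉ F.image χ ∧ ∃ u v, u ≠ v ∧ Iso F u ∧ Iso F v ∧ χ s(u, v) = c

open Classical in
noncomputable def kc (χ : Sym2 V → C) (F : Finset (Sym2 V)) : Finset C := univ.filter (Clean χ F)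

open Classical in
noncomputable def qc (χ : Sym2 V → C) (F : Finset (Sym2 V)) : Finset C := univ.filter (Special χ F)

theorem Valid.ext {χ : Sym2 V → C} {F : Finset (Sym2 V)} (h : Valid χ F) {e f : Sym2 V} {c : C}
    (hc : c ∉ F.image χ) (he : χ e = c) (hf : χ f = c) (hef : e ≠ f)
    (hL : LF (insert e (insert f F))) :
    Valid χ (insert e (insert f F)) ∧ (insert e (insert f F)).card = F.card + 2 := by
  have hcF : ∀ g ∈ F, χ g ≠ c := fun g hg h' => hc (h' ▸ Finset.mem_image_of_mem χ hg)
  have hfF : f ∉ F := fun h' => hcF f h' hf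
  have heF : e ∉ insert f F := by
    rw [Finset.mem_insert]
    rintro (h' | h')
    · exact hef h'
    · exact hcF e h' he
  refine ⟨⟨hL, ?_⟩, by rw [Finset.card_insert_of_notMem heF, Finset.card_insert_of_notMem hfF]⟩
  intro c' hc'
  by_cases hcc : c' = c
  · subst hcc
    have : (insert e (insert f F)).filter (fun e => χ e = c') = {e, f} := by
      ext g
      simp only [Finset.mem_filter, Finset.mem_insert, Finset.mem_singleton]
      constructor
      · rintro ⟨h1 | h1 | h1, h2⟩
        · exact Or.inl h1
        · exact Or.inr h1
        · exact absurd h2 (hcF g h1)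
      · rintro (rfl | rfl) <;> simp [he, hf]
    rw [this, Finset.card_pair hef]
  · have : (insert e (insert f F)).filter (fun e => χ e = c') = F.filter (fun e => χ e = c') := by
      ext g
      simp only [Finset.mem_filter, Finset.mem_insert]
      constructor
      · rintro ⟨rfl | rfl | h1, h2⟩
        · exact absurd (h2.symm.trans he) hcc
        · exact absurd (h2.symm.trans hf) hcc
        · exact ⟨h1, h2⟩
      · rintro ⟨h1, h2⟩; exact ⟨Or.inr (Or.inr h1), h2⟩
    rw [this]
    apply h.2
    simp only [Finset.mem_image, Finset.mem_insert] at hc' ⊢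
    obtain ⟨g, rfl | rfl | h1, h2⟩ := hc'
    · exact absurd (h2.symm.trans he) hcc
    · exact absurd (h2.symm.trans hf) hcc
    · exact ⟨g, h1, h2⟩

theorem exists_max (χ : Sym2 V → C) (h0 : LF (∅ : Finset (Sym2 V))) :
    ∃ F, Valid χ F ∧ (∀ G, Valid χ G → G.card ≤ F.card) ∧
      (∀ G, Valid χ G → G.card = F.card → (kc χ G).card ≤ (kc χ F).card) ∧
      (∀ G, Valid χ G → G.card = F.card → (kc χ G).card = (kc χ F).card →
        (qc χ G).card ≤ (qc χ F).card) := by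
  classical
  let pot : Finset (Sym2 V) → ℕ ×ₗ (ℕ ×ₗ ℕ) :=
    fun F => toLex (F.card, toLex ((kc χ F).card, (qc χ F).card))
  obtain ⟨F, hF, hmax⟩ := Finset.exists_max_image (univ.filter (Valid χ)) pot
    ⟨∅, by simp [Valid, h0]⟩
  simp only [Finset.mem_filter, Finset.mem_univ, true_and] at hF hmax
  have key : ∀ G, Valid χ G → G.card < F.card ∨ G.card = F.card ∧
      ((kc χ G).card < (kc χ F).card ∨ (kc χ G).card = (kc χ F).card ∧
        (qc χ G).card ≤ (qc χ F).card) := by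
    intro G hG
    have := hmax G hG
    simpa [pot, Prod.Lex.toLex_le_toLex] using this
  refine ⟨F, hF, fun G hG => ?_, fun G hG h1 => ?_, fun G hG h1 h2 => ?_⟩ <;>
  · have := key G hG
    omega

/-- vertices spoiled by colour `c` -/
def Spoil (χ : Sym2 V → C) (F : Finset (Sym2 V)) (c : C) (z : V) : Prop :=
  Iso F z ∧ ∃ y, y ≠ z ∧ D1 F y ∧ χ s(z, y) = c

theorem spoil_unique {χ : Sym2 V → C} {F : Finset (Sym2 V)} (hF : Valid χ F)
    (h1 : ∀ G, Valid χ G → G.card ≤ F.card)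
    (h2 : ∀ G, Valid χ G → G.card = F.card → (kc χ G).card ≤ (kc χ F).card)
    (h3 : ∀ G, Valid χ G → G.card = F.card → (kc χ G).card = (kc χ F).card →
        (qc χ G).card ≤ (qc χ F).card)
    (E : Finset V) (hE : ∀ c, Special χ F c →
      ∃ u ∈ E, ∃ v ∈ E, u ≠ v ∧ Iso F u ∧ Iso F v ∧ χ s(u, v) = c)
    {c : C} (hc : c ∉ F.image χ) {z z' : V} (hz : Spoil χ F c z) (hz' : Spoil χ F c z')
    (hzE : z ∉ E) (hzE' : z' ∉ E) : z = z' := by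
  by_contra hne
  obtain ⟨iz, y, hyz, dy, hcy⟩ := hz
  obtain ⟨iz', y', hyz', dy', hcy'⟩ := hz'
  have noext : ∀ e f, χ e = c → χ f = c → e ≠ f → ¬ LF (insert e (insert f F)) := by
    intro e f he hf hef hL
    have := hF.ext hc he hf hef hL
    have := h1 _ this.1
    omega
  by_cases hs : Special χ F c
  · obtain ⟨u, hu, v, hv, huv, iu, iv, hcuv⟩ := hE c hs
    have hzu : z ∉ s(u, v) := by
      rw [Sym2.mem_iff]
      rintro (rfl | rfl)
      · exact hzE hu
      · exact hzE hv
    refine noext s(z, y) s(u, v) hcy hcuv (fun h => hzu (h ▸ by simp)) ?_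
    apply (hF.1.add iu iv.d1 huv.symm).add (iz.insert hzu) _ hyz
    by_cases hy : y ∈ s(u, v)
    · rcases Sym2.mem_iff.1 hy with rfl | rfl
      · exact iu.d1_insert _
      · exact iv.d1_insert _
    · exact dy.insert hy
  · have niy : ¬ Iso F y := fun h => hs ⟨hc, z, y, hyz.symm, iz, h, hcy⟩
    have niy' : ¬ Iso F y' := fun h => hs ⟨hc, z', y', hyz'.symm, iz', h, hcy'⟩
    have hyz2 : y ≠ z' := by rintro rfl; exact niy iz'
    have hyz2' : y' ≠ z := by rintro rfl; exact niy' iz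
    have hz2 : z ∉ s(z', y') := by
      rw [Sym2.mem_iff]
      rintro (h | h)
      · exact hne h
      · exact hyz2' h.symm
    have hedge : s(z, y) ≠ s(z', y') := fun h => hz2 (h ▸ by simp)
    by_cases hyy : y = y'
    swap
    · refine noext s(z, y) s(z', y') hcy hcy' hedge ?_
      apply (hF.1.add iz' dy' hyz').add (iz.insert hz2) (dy.insert _) hyz
      rw [Sym2.mem_iff]
      tauto
    subst hyy
    obtain ⟨e0, he0, hye0⟩ : ∃ e0 ∈ F, y ∈ e0 := by
      by_contra h
      exact niy fun e he hy => h ⟨e, he, hy⟩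
    obtain ⟨d, hd⟩ : ∃ d, χ e0 = d := ⟨_, rfl⟩
    have hdF : d ∈ F.image χ := hd ▸ Finset.mem_image_of_mem χ he0
    have hcd : c ≠ d := by rintro rfl; exact hc hdF
    obtain ⟨F0, hF0⟩ : ∃ F0, F0 = F.filter (fun e => χ e ≠ d) := ⟨_, rfl⟩
    have memF0 : ∀ e, e ∈ F0 ↔ e ∈ F ∧ χ e ≠ d := by intro e; rw [hF0, Finset.mem_filter]
    have iz0 : Iso F0 z := fun e he => iz e ((memF0 e).1 he).1
    have iz0' : Iso F0 z' := fun e he => iz' e ((memF0 e).1 he).1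
    have iy0 : Iso F0 y := fun e he hy => by
      have h := (memF0 e).1 he
      have := dy e h.1 e0 he0 hy hye0
      exact h.2 (this ▸ hd)
    have hcF0 : c ∉ F0.image χ := by
      intro h
      obtain ⟨e, he, h'⟩ := Finset.mem_image.1 h
      exact hc (h' ▸ Finset.mem_image_of_mem χ ((memF0 e).1 he).1)
    have hV0 : Valid χ F0 := by
      refine ⟨hF.1.mono (hF0 ▸ Finset.filter_subset _ _), fun c' hc' => ?_⟩
      obtain ⟨g, hg, rfl⟩ := Finset.mem_image.1 hc'
      have hg' := (memF0 g).1 hg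
      rw [← hF.2 (χ g) (Finset.mem_image_of_mem χ hg'.1)]
      congr 1
      ext e
      simp only [Finset.mem_filter, memF0]
      constructor
      · rintro ⟨⟨a, _⟩, b⟩; exact ⟨a, b⟩
      · rintro ⟨a, b⟩; exact ⟨⟨a, b ▸ hg'.2⟩, b⟩
    have hcard0 : F0.card + 2 = F.card := by
      rw [hF0, ← hF.2 d hdF, add_comm]
      exact Finset.card_filter_add_card_filter_not _
    have hL1 : LF (insert s(z, y) (insert s(z', y) F0)) :=
      (hV0.1.add iz0' iy0.d1 hyz').add (iz0.insert hz2) (iy0.d1_insert _) hyz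
    obtain ⟨hV1, hcard1⟩ := hV0.ext hcF0 hcy hcy' hedge hL1
    obtain ⟨F1, hF1⟩ : ∃ F1, F1 = insert s(z, y) (insert s(z', y) F0) := ⟨_, rfl⟩
    rw [← hF1] at hV1 hcard1
    have hcardF : F1.card = F.card := by omega
    have memF1 : ∀ e, e ∈ F1 ↔ e = s(z, y) ∨ e = s(z', y) ∨ e ∈ F0 := by
      intro e; rw [hF1]; simp
    -- a vertex of an old edge is not in a new edge
    have sep : ∀ e ∈ F1, e ∈ F0 ∨ (χ e = c ∧ ∀ w ∈ e, Iso F0 w) := by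
      intro e he
      rcases (memF1 e).1 he with rfl | rfl | h
      · refine Or.inr ⟨hcy, fun w hw => ?_⟩
        rcases Sym2.mem_iff.1 hw with rfl | rfl
        · exact iz0
        · exact iy0
      · refine Or.inr ⟨hcy', fun w hw => ?_⟩
        rcases Sym2.mem_iff.1 hw with rfl | rfl
        · exact iz0'
        · exact iy0
      · exact Or.inl h
    have cleanc : Clean χ F1 c := by
      refine ⟨Finset.mem_image.2 ⟨s(z, y), (memF1 _).2 (Or.inl rfl), hcy⟩, ?_⟩
      intro e he hce f hf w hwe hwf
      rcases sep e he with h | ⟨_, h⟩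
      · exact absurd (hce ▸ Finset.mem_image_of_mem χ h) hcF0
      · rcases sep f hf with h' | h'
        · exact absurd hwf (h w hwe f h')
        · exact h'.1
    have cleanold : ∀ c', c' ≠ d → Clean χ F c' → Clean χ F1 c' := by
      rintro c' hcd' ⟨hc', hcl⟩
      have hcc' : c' ≠ c := by rintro rfl; exact hc hc'
      constructor
      · obtain ⟨e, he, rfl⟩ := Finset.mem_image.1 hc'
        exact Finset.mem_image_of_mem χ ((memF1 e).2 (Or.inr (Or.inr ((memF0 e).2 ⟨he, hcd'⟩))))
      · intro e he hce f hf w hwe hwf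
        rcases sep e he with h | ⟨h, _⟩
        · rcases sep f hf with h' | ⟨_, h'⟩
          · exact hcl e ((memF0 e).1 h).1 hce f ((memF0 f).1 h').1 w hwe hwf
          · exact absurd hwe (h' w hwf e h)
        · exact absurd (hce.symm.trans h) hcc'
    have hck : c ∉ kc χ F := by
      simp only [kc, Finset.mem_filter, Finset.mem_univ, true_and]
      exact fun h => hc h.1
    by_cases hcl : Clean χ F d
    swap
    · have : insert c (kc χ F) ⊆ kc χ F1 := by
        intro c' hc'
        rcases Finset.mem_insert.1 hc' with rfl | hc'
        · simpa [kc] using cleanc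
        · simp only [kc, Finset.mem_filter, Finset.mem_univ, true_and] at hc' ⊢
          exact cleanold c' (by rintro rfl; exact hcl hc') hc'
      have := Finset.card_le_card this
      rw [Finset.card_insert_of_notMem hck] at this
      have := h2 F1 hV1 hcardF
      omega
    have hk : (kc χ F1).card = (kc χ F).card := by
      have : insert c ((kc χ F).erase d) ⊆ kc χ F1 := by
        intro c' hc'
        rcases Finset.mem_insert.1 hc' with rfl | hc'
        · simpa [kc] using cleanc
        · simp only [kc, Finset.mem_erase, Finset.mem_filter, Finset.mem_univ, true_and] at hc' ⊢
          exact cleanold c' hc'.1 hc'.2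
      have := Finset.card_le_card this
      rw [Finset.card_insert_of_notMem (fun h => hck (Finset.mem_of_mem_erase h)),
        Finset.card_erase_add_one (by simpa [kc] using hcl)] at this
      have := h2 F1 hV1 hcardF
      omega
    have hdF1 : d ∉ F1.image χ := by
      intro h
      obtain ⟨e, he, h'⟩ := Finset.mem_image.1 h
      rcases sep e he with h | ⟨h, _⟩
      · exact ((memF0 e).1 h).2 h'
      · exact hcd (h.symm.trans h')
    have spd : Special χ F1 d := by
      obtain ⟨f, hf, hfe⟩ : ∃ f ∈ F.filter (fun e => χ e = d), f ≠ e0 :=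
        Finset.exists_mem_ne (by rw [hF.2 d hdF]; norm_num) e0
      obtain ⟨hfF, hfd⟩ := Finset.mem_filter.1 hf
      have hiso : ∀ g ∈ f, Iso F1 g := by
        intro g hg e he hge
        rcases (memF1 e).1 he with rfl | rfl | h
        · rcases Sym2.mem_iff.1 hge with rfl | rfl
          · exact iz f hfF hg
          · exact hfe (dy f hfF e0 he0 hg hye0)
        · rcases Sym2.mem_iff.1 hge with rfl | rfl
          · exact iz' f hfF hg
          · exact hfe (dy f hfF e0 he0 hg hye0)
        · have h := (memF0 e).1 h
          exact h.2 (hcl.2 f hfF hfd e h.1 g hg hge)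
      induction f using Sym2.ind with
      | _ g h =>
        obtain ⟨l, hn, _, hl⟩ := hF.1
        exact ⟨hdF1, g, h, edg_not_diag hn (hl _ hfF), hiso g (by simp), hiso h (by simp), hfd⟩
    have hq : insert d (qc χ F) ⊆ qc χ F1 := by
      intro c' hc'
      rcases Finset.mem_insert.1 hc' with rfl | hc'
      · simpa [qc] using spd
      · simp only [qc, Finset.mem_filter, Finset.mem_univ, true_and] at hc' ⊢
        obtain ⟨u, hu, v, hv, huv, iu, iv, huvc⟩ := hE c' hc'
        have hiso : ∀ u ∈ E, Iso F u → Iso F1 u := by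
          intro u hu iu e he hue
          rcases (memF1 e).1 he with rfl | rfl | h
          · rcases Sym2.mem_iff.1 hue with rfl | rfl
            · exact hzE hu
            · exact niy iu
          · rcases Sym2.mem_iff.1 hue with rfl | rfl
            · exact hzE' hu
            · exact niy iu
          · exact iu e ((memF0 e).1 h).1 hue
        refine ⟨?_, u, v, huv, hiso u hu iu, hiso v hv iv, huvc⟩
        intro h
        obtain ⟨e, he, h'⟩ := Finset.mem_image.1 h
        rcases sep e he with h | ⟨h, _⟩
        · exact hc'.1 (h' ▸ Finset.mem_image_of_mem χ ((memF0 e).1 h).1)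
        · exact hs (h ▸ h' ▸ hc')
    have hdq : d ∉ qc χ F := by
      simp only [qc, Finset.mem_filter, Finset.mem_univ, true_and]
      exact fun h => h.1 hdF
    have := Finset.card_le_card hq
    rw [Finset.card_insert_of_notMem hdq] at this
    have := h3 F1 hV1 hcardF hk
    omega

theorem main_list (χ : Sym2 V → C) (hcard : 4 * Fintype.card C ≤ Fintype.card V) :
    ∃ l : List V, l.Nodup ∧ (∀ v, v ∈ l) ∧
      ∀ c, ((edg l).filter (fun e => χ e = c)).length ≠ 1 := by
  classical
  have h0 : LF (∅ : Finset (Sym2 V)) :=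
    ⟨(univ : Finset V).toList, Finset.nodup_toList _, by simp, by simp⟩
  obtain ⟨F, hF, h1, h2, h3⟩ := exists_max χ h0
  have hsp : ∀ c, ∃ E : Finset V, E.card ≤ 2 ∧ (Special χ F c →
      ∃ u ∈ E, ∃ v ∈ E, u ≠ v ∧ Iso F u ∧ Iso F v ∧ χ s(u, v) = c) := by
    intro c
    by_cases hs : Special χ F c
    · obtain ⟨_, u, v, h⟩ := hs
      exact ⟨{u, v}, Finset.card_le_two, fun _ => ⟨u, by simp, v, by simp, h⟩⟩
    · exact ⟨∅, by simp, fun h => absurd h hs⟩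
  choose Ec hEc hEs using hsp
  let T : Finset C := (F.image χ)ᶜ
  let E : Finset V := T.biUnion Ec
  have hEcard : E.card ≤ T.card * 2 := Finset.card_biUnion_le_card_mul _ _ _ fun c _ => hEc c
  have hE : ∀ c, Special χ F c →
      ∃ u ∈ E, ∃ v ∈ E, u ≠ v ∧ Iso F u ∧ Iso F v ∧ χ s(u, v) = c := by
    intro c hc
    have hcT : c ∈ T := by simpa [T] using hc.1
    obtain ⟨u, hu, v, hv, h⟩ := hEs c hc
    exact ⟨u, Finset.mem_biUnion.2 ⟨c, hcT, hu⟩, v, Finset.mem_biUnion.2 ⟨c, hcT, hv⟩, h⟩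
  let B : C → Finset V := fun c => univ.filter (fun z => Spoil χ F c z ∧ z ∉ E)
  have hB : (T.biUnion B).card ≤ T.card * 1 := by
    refine Finset.card_biUnion_le_card_mul _ _ _ fun c hc => ?_
    rw [Finset.card_le_one]
    intro a ha b hb
    simp only [B, Finset.mem_filter, Finset.mem_univ, true_and] at ha hb
    have hc' : c ∉ F.image χ := by simpa only [T, Finset.mem_compl] using hc
    exact spoil_unique hF h1 h2 h3 E hE hc' ha.1 hb.1 ha.2 hb.2
  let N : Finset V := F.biUnion Sym2.toFinset
  have hN : N.card ≤ F.card * 2 := by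
    refine Finset.card_biUnion_le_card_mul _ _ _ fun e _ => ?_
    induction e using Sym2.ind with
    | _ a b => rw [Sym2.toFinset_mk_eq]; exact Finset.card_le_two
  have hFc : F.card = (F.image χ).card * 2 := by
    rw [Finset.card_eq_sum_card_image χ F]
    exact Finset.sum_const_nat hF.2
  have hT : T.card + (F.image χ).card = Fintype.card C := by
    rw [add_comm]; exact Finset.card_add_card_compl _
  let W : Finset V := (N ∪ E ∪ T.biUnion B)ᶜ
  have hWc : T.card ≤ W.card := by
    have a1 : W.card + (N ∪ E ∪ T.biUnion B).card = Fintype.card V := by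
      rw [add_comm]; exact Finset.card_add_card_compl _
    have a2 := Finset.card_union_le (N ∪ E) (T.biUnion B)
    have a3 := Finset.card_union_le N E
    omega
  have hWiso : ∀ w ∈ W, Iso F w := by
    intro w hw e he hwe
    simp only [W, Finset.mem_compl, Finset.mem_union, not_or] at hw
    exact hw.1.1 (Finset.mem_biUnion.2 ⟨e, he, Sym2.mem_toFinset.2 hwe⟩)
  let bad : Sym2 V → Bool := fun e => decide (χ e ∉ F.image χ)
  have hgood : ∀ w ∈ W, ∀ y, y ≠ w → D1 F y → bad s(w, y) = false := by
    intro w hw y hy dy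
    simp only [bad, decide_eq_false_iff_not, not_not]
    by_contra hbad
    have hiw := hWiso w hw
    simp only [W, Finset.mem_compl, Finset.mem_union, not_or] at hw
    refine hw.2 (Finset.mem_biUnion.2 ⟨χ s(w, y), by simpa only [T, Finset.mem_compl] using hbad, ?_⟩)
    simp only [B, Finset.mem_filter, Finset.mem_univ, true_and]
    exact ⟨⟨hiw, y, hy, dy, rfl⟩, hw.1.2⟩
  have hbF : ∀ e ∈ F, bad e = false := by
    intro e he
    simp only [bad, decide_eq_false_iff_not, not_not]
    exact Finset.mem_image_of_mem χ he
  obtain ⟨l0, hn0, ha0, hF0⟩ := hF.1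
  obtain ⟨l1, hn1, hF1, hm1⟩ := delete_all W hWiso l0 hn0 hF0
  have hcount : (edg l1).countP bad ≤ W.card := by
    refine le_trans ?_ hWc
    by_contra hlt
    push Not at hlt
    have hnd : ((edg l1).filter bad).Nodup := (edg_nodup hn1).filter _
    have hlen : (edg l1).countP bad = ((edg l1).filter bad).toFinset.card := by
      rw [List.toFinset_card_of_nodup hnd, List.countP_eq_length_filter]
    rw [hlen] at hlt
    obtain ⟨e, he, f, hf, hef, hχ⟩ := Finset.exists_ne_map_eq_of_card_lt_of_maps_to hlt
      (f := χ) (fun e he => by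
        have := (List.mem_filter.1 (List.mem_toFinset.1 he)).2
        simp only [bad, decide_eq_true_eq] at this
        simpa only [T, Finset.mem_coe, Finset.mem_compl] using this)
    have he' := List.mem_filter.1 (List.mem_toFinset.1 he)
    have hf' := List.mem_filter.1 (List.mem_toFinset.1 hf)
    have hL : LF (insert e (insert f F)) := by
      refine ⟨l1 ++ W.toList, ?_, ?_, ?_⟩
      · rw [List.nodup_append]
        refine ⟨hn1, Finset.nodup_toList _, ?_⟩
        rintro a ha b hb rfl
        exact ((hm1 a).1 ha).2 (Finset.mem_toList.1 hb)
      · intro v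
        rw [List.mem_append, hm1, Finset.mem_toList]
        have := ha0 v
        tauto
      · intro g hg
        rw [mem_edg_append]
        left
        rcases Finset.mem_insert.1 hg with rfl | hg
        · exact he'.1
        rcases Finset.mem_insert.1 hg with rfl | hg
        · exact hf'.1
        · exact hF1 g hg
    have hbe : χ e ∉ F.image χ := by simpa only [bad, decide_eq_true_eq] using he'.2
    have := hF.ext hbe rfl hχ.symm hef hL
    have := h1 _ this.1
    omega
  obtain ⟨l, hn, hFl, hml, hbl⟩ := fix_bad bad hbF W hgood l1 hn1 hF1
    (fun w hw h => ((hm1 w).1 h).2 hw) hcount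
  refine ⟨l, hn, ?_, ?_⟩
  · intro v
    apply hml
    rw [hm1]
    have := ha0 v
    tauto
  · intro c hc
    have hnd : ((edg l).filter (fun e => χ e = c)).Nodup := (edg_nodup hn).filter _
    by_cases hcF : c ∈ F.image χ
    · have hsub : F.filter (fun e => χ e = c) ⊆ ((edg l).filter (fun e => χ e = c)).toFinset := by
        intro e he
        rw [Finset.mem_filter] at he
        simp [hFl e he.1, he.2]
      have := Finset.card_le_card hsub
      rw [List.toFinset_card_of_nodup hnd, hF.2 c hcF] at this
      omega
    · obtain ⟨e, he⟩ := List.exists_mem_of_length_pos (by omega :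
        0 < ((edg l).filter (fun e => χ e = c)).length)
      rw [List.mem_filter] at he
      have hb := (List.countP_eq_zero.1 hbl) e he.1
      apply hb
      simp only [bad, decide_eq_true_eq]
      have : χ e = c := by simpa using he.2
      rwa [this]

end main

end UR

/-- **Theorem.** For `n ≥ 4`, the unique-Ramsey number of Hamilton paths
satisfies `r_u(n, P_n) > n/4`: for every `r` with `1 ≤ r` and `r ≤ n/4`
(i.e. `4r ≤ n`) and every `r`-coloring of the edges of `K_n`, there is a
Hamilton path in which no color occurs exactly once. -/
theorem unique_ramsey_hamilton_path_lower (n r : ℕ) (hn : 4 ≤ n) (hr : 1 ≤ r)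
    (hrn : 4 * r ≤ n) (χ : Sym2 (Fin n) → Fin r) :
    ∃ (u v : Fin n) (w : (⊤ : SimpleGraph (Fin n)).Walk u v), w.IsHamiltonian ∧
      ∀ c : Fin r, (w.edges.filter (fun e => χ e = c)).length ≠ 1 := by
  obtain ⟨l, hnd, hall, hc⟩ := UR.main_list χ (by simpa using hrn)
  cases l with
  | nil => exact absurd (hall ⟨0, by omega⟩) (by simp)
  | cons u l =>
    obtain ⟨v, w, hs, he⟩ := UR.exists_walk l u hnd
    refine ⟨u, v, w, ?_, ?_⟩
    · intro a
      rw [hs]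
      exact List.count_eq_one_of_mem hnd (hall a)
    · rw [he]
      exact hc
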